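/- Every locally residually amenable group is sofic. That is, if G is a group such that every finitely generated subgroup of G is residually amenable, then G is sofic. -/

import Mathlib

/-- Two self-maps of a finite set `A` are `ε`-similar if the number of points where they
differ is at most `ε·|A|`. They are `(1-ε)`-different if they are not `(1-ε)`-similar. -/
def EpsSimilar {A : Type*} [Fintype A] (ε : ℝ) (e f : A → A) : Prop :=
  (Nat.card {a : A // e a ≠ f a} : ℝ) ≤ ε * Fintype.card A

/-- An `(F, ε)`-quasi-action of a group `G` on a finite set `A`:
(a) `φ(ef)` is `ε`-similar to `φ(e)` followed by `φ(f)` for `e, f ∈ F`;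
(b) `φ(1)` is `ε`-similar to the identity;
(c) for `1 ≠ e ∈ F`, `φ(e)` is `(1-ε)`-different from the identity. -/
def IsQuasiAction {G : Type*} [Group G] (F : Finset G) (ε : ℝ)
    {A : Type*} [Fintype A] (φ : G → A → A) : Prop :=
  (∀ e ∈ F, ∀ f ∈ F, EpsSimilar ε (φ (e * f)) (fun a => φ f (φ e a))) ∧
  EpsSimilar ε (φ 1) id ∧
  (∀ e ∈ F, e ≠ 1 → ¬ EpsSimilar (1 - ε) (φ e) id)

/-- A group `G` is sofic if for every finite subset `F ⊆ G` and every `ε ∈ (0,1)` there is an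
`(F, ε)`-quasi-action of `G` on some finite nonempty set. -/
def IsSofic (G : Type*) [Group G] : Prop :=
  ∀ (F : Finset G) (ε : ℝ), 0 < ε → ε < 1 →
    ∃ (A : Type) (_ : Fintype A) (_ : Nonempty A) (φ : G → A → A),
      IsQuasiAction F ε φ

/-- A group `M` satisfies the Følner condition (is amenable as a discrete group) if for every
finite `F ⊆ M` and every `ε > 0` there is a nonempty finite `A ⊆ M` with
`|A·g \ A| ≤ ε·|A|` for all `g ∈ F`. -/
def FolnerCondition (M : Type*) [Group M] : Prop :=
  ∀ (F : Finset M) (ε : ℝ), 0 < ε →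
    ∃ A : Finset M, A.Nonempty ∧
      ∀ g ∈ F, ((((fun a => a * g) '' (A : Set M)) \ (A : Set M)).ncard : ℝ) ≤ ε * A.card

/-- A group is residually amenable if every nontrivial element survives in a homomorphism
to some group satisfying the Følner condition. -/
def ResiduallyAmenable (G : Type*) [Group G] : Prop :=
  ∀ g : G, g ≠ 1 → ∃ (M : Type) (_ : Group M), FolnerCondition M ∧ ∃ φ : G →* M, φ g ≠ 1

theorem folner_punit : FolnerCondition PUnit.{1} := by
  intro F ε hε
  refine ⟨{1}, by simp, fun g _ => ?_⟩
  have : ((fun a => a * g) '' (({1} : Finset PUnit.{1}) : Set PUnit.{1})) \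
      (({1} : Finset PUnit.{1}) : Set PUnit.{1}) = ∅ := by
    ext x
    simp
  rw [this]
  simp [hε.le]

theorem folner_prod {M N : Type} [Group M] [Group N] (hM : FolnerCondition M)
    (hN : FolnerCondition N) : FolnerCondition (M × N) := by
  classical
  intro F ε hε
  obtain ⟨A, hA, hA'⟩ := hM (F.image Prod.fst) (ε / 2) (by positivity)
  obtain ⟨B, hB, hB'⟩ := hN (F.image Prod.snd) (ε / 2) (by positivity)
  refine ⟨A ×ˢ B, hA.product hB, fun g hg => ?_⟩
  have h1 := hA' g.1 (Finset.mem_image_of_mem _ hg)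
  have h2 := hB' g.2 (Finset.mem_image_of_mem _ hg)
  set S : Set M := ((fun a => a * g.1) '' (A : Set M)) \ (A : Set M) with hS
  set T : Set N := ((fun a => a * g.2) '' (B : Set N)) \ (B : Set N) with hT
  have hSf : S.Finite := (A.finite_toSet.image _).sdiff
  have hTf : T.Finite := (B.finite_toSet.image _).sdiff
  have hsub : (((fun a => a * g) '' ((A ×ˢ B : Finset (M × N)) : Set (M × N))) \
      ((A ×ˢ B : Finset (M × N)) : Set (M × N))) ⊆
      (S ×ˢ ((fun a => a * g.2) '' (B : Set N))) ∪ (((fun a => a * g.1) '' (A : Set M)) ×ˢ T) := by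
    rintro x ⟨⟨⟨a, b⟩, hab, rfl⟩, hx⟩
    simp only [Finset.coe_product, Set.mem_prod, Finset.mem_coe] at hab hx
    by_cases hc : a * g.1 ∈ A
    · right
      refine ⟨⟨a, hab.1, rfl⟩, ⟨b, hab.2, rfl⟩, fun hd => hx ⟨hc, hd⟩⟩
    · left
      exact ⟨⟨⟨a, hab.1, rfl⟩, hc⟩, ⟨b, hab.2, rfl⟩⟩
  have hle := (Set.ncard_le_ncard hsub
    ((hSf.prod (B.finite_toSet.image _)).union ((A.finite_toSet.image _).prod hTf))).trans
    (Set.ncard_union_le _ _)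
  rw [Set.ncard_prod, Set.ncard_prod, Set.ncard_image_of_injective _ (mul_left_injective _),
    Set.ncard_image_of_injective _ (mul_left_injective _), Set.ncard_coe_finset,
    Set.ncard_coe_finset] at hle
  have hle' : ((((fun a => a * g) '' ((A ×ˢ B : Finset (M × N)) : Set (M × N))) \
      ((A ×ˢ B : Finset (M × N)) : Set (M × N))).ncard : ℝ) ≤
      S.ncard * B.card + A.card * T.ncard := by exact_mod_cast hle
  refine hle'.trans ?_
  rw [Finset.card_product]
  push_cast
  have e1 := mul_le_mul_of_nonneg_right h1 (Nat.cast_nonneg (α := ℝ) B.card)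
  have e2 := mul_le_mul_of_nonneg_left h2 (Nat.cast_nonneg (α := ℝ) A.card)
  linarith

theorem exists_hom_of_resAmenable {H : Type*} [Group H] (h : ResiduallyAmenable H)
    (S : Finset H) : ∃ (M : Type) (_ : Group M), FolnerCondition M ∧
      ∃ φ : H →* M, ∀ g ∈ S, g ≠ 1 → φ g ≠ 1 := by
  classical
  induction S using Finset.induction_on with
  | empty => exact ⟨PUnit, inferInstance, folner_punit, 1, by simp⟩
  | insert a S _ ih =>
    obtain ⟨M, _, hM, φ, hφ⟩ := ih
    by_cases ha : a = 1
    · refine ⟨M, _, hM, φ, fun g hg hg1 => ?_⟩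
      rcases Finset.mem_insert.1 hg with rfl | hg
      · exact absurd ha hg1
      · exact hφ g hg hg1
    · obtain ⟨N, _, hN, ψ, hψ⟩ := h a ha
      refine ⟨M × N, inferInstance, folner_prod hM hN, φ.prod ψ, fun g hg hg1 he => ?_⟩
      rw [MonoidHom.prod_apply, Prod.mk_eq_one] at he
      rcases Finset.mem_insert.1 hg with rfl | hg
      · exact hψ he.2
      · exact hφ g hg hg1 he.1

/-- Every locally residually amenable group (every finitely generated subgroup is residually
amenable) is sofic. -/
theorem isSofic_of_locally_residuallyAmenable {G : Type*} [Group G]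
    (h : ∀ H : Subgroup G, H.FG → ResiduallyAmenable H) : IsSofic G := by
  classical
  intro F ε hε hε1
  let H : Subgroup G := Subgroup.closure (F : Set G)
  have hFH : ∀ g ∈ F, g ∈ H := fun g hg => Subgroup.subset_closure hg
  obtain ⟨M, _, hM, ψ, hψ⟩ := exists_hom_of_resAmenable (h H ⟨F, rfl⟩)
    (F.subtype (fun g => g ∈ H))
  let Ψ : G → M := fun g => if hg : g ∈ H then ψ ⟨g, hg⟩ else 1
  have hΨ : ∀ g (hg : g ∈ H), Ψ g = ψ ⟨g, hg⟩ := fun g hg => dif_pos hg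
  have hΨ1 : Ψ 1 = 1 := by
    rw [hΨ 1 H.one_mem]; exact ψ.map_one
  have hΨmul : ∀ e ∈ F, ∀ f ∈ F, Ψ (e * f) = Ψ e * Ψ f := by
    intro e he f hf
    rw [hΨ e (hFH e he), hΨ f (hFH f hf), hΨ _ (H.mul_mem (hFH e he) (hFH f hf)), ← map_mul]
    rfl
  have hΨne : ∀ e ∈ F, e ≠ 1 → Ψ e ≠ 1 := by
    intro e he he1
    rw [hΨ e (hFH e he)]
    refine hψ _ (by simpa using he) (fun hc => he1 ?_)
    exact congrArg Subtype.val hc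
  obtain ⟨A, hA, hAF⟩ := hM ((F ∪ (F ×ˢ F).image (fun p => p.1 * p.2)).image Ψ) (ε / 2)
    (by positivity)
  have hpos : (0 : ℝ) < A.card := by exact_mod_cast hA.card_pos
  let B : M → Finset A := fun g => Finset.univ.filter (fun a : A => (a : M) * g ∉ A)
  have hB : ∀ g ∈ F ∪ (F ×ˢ F).image (fun p => p.1 * p.2),
      ((B (Ψ g)).card : ℝ) ≤ ε / 2 * A.card := by
    intro g hg
    refine le_trans ?_ (hAF (Ψ g) (Finset.mem_image_of_mem _ hg))
    rw [← Set.ncard_coe_finset]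
    refine Nat.cast_le.2 ?_
    refine Set.ncard_le_ncard_of_injOn (fun a : A => (a : M) * Ψ g) ?_ ?_
      ((A.finite_toSet.image _).sdiff)
    · intro a ha
      have ha' : (a : M) * Ψ g ∉ A := by simpa [B] using ha
      exact ⟨⟨a, a.2, rfl⟩, ha'⟩
    · intro a _ b _ hab
      exact Subtype.ext (mul_left_injective _ hab)
  refine ⟨A, inferInstance, hA.to_subtype,
    fun g a => if hg : (a : M) * Ψ g ∈ A then ⟨(a : M) * Ψ g, hg⟩ else a, ?_, ?_, ?_⟩
  · intro e he f hf
    have h1 := hB e (Finset.mem_union_left _ he)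
    have h2 := hB (e * f) (Finset.mem_union_right _
      (Finset.mem_image.2 ⟨(e, f), Finset.mk_mem_product he hf, rfl⟩))
    unfold EpsSimilar
    rw [Nat.card_eq_fintype_card, Fintype.card_subtype, Fintype.card_coe]
    have hc : (Finset.univ.filter (fun a : A =>
        (if hg : (a : M) * Ψ (e * f) ∈ A then (⟨(a : M) * Ψ (e * f), hg⟩ : A) else a) ≠
        (fun a : A => (if hg : (a : M) * Ψ f ∈ A then (⟨(a : M) * Ψ f, hg⟩ : A) else a))
        (if hg : (a : M) * Ψ e ∈ A then (⟨(a : M) * Ψ e, hg⟩ : A) else a))) ⊆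
        B (Ψ e) ∪ B (Ψ (e * f)) := by
      intro a ha
      by_contra hn
      simp only [B, Finset.mem_union, Finset.mem_filter, Finset.mem_univ, true_and, not_or,
        not_not] at hn
      refine (Finset.mem_filter.1 ha).2 ?_
      have h3 : (a : M) * Ψ e * Ψ f ∈ A := by
        rw [mul_assoc, ← hΨmul e he f hf]; exact hn.2
      simp only [dif_pos hn.1, dif_pos hn.2, dif_pos h3]
      apply Subtype.ext
      simp only [hΨmul e he f hf, mul_assoc]
    have hc' := (Finset.card_le_card hc).trans (Finset.card_union_le _ _)
    have hc'' : ((_ : ℕ) : ℝ) ≤ ((_ : ℕ) : ℝ) := Nat.cast_le.2 hc'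
    push_cast at hc''
    refine le_trans hc'' ?_
    linarith
  · unfold EpsSimilar
    have : ∀ a : A, ¬ ((if hg : (a : M) * Ψ 1 ∈ A then (⟨(a : M) * Ψ 1, hg⟩ : A) else a)
        ≠ id a) := by
      intro a
      simp [hΨ1]
    have := Subtype.isEmpty_of_false this
    rw [Nat.card_of_isEmpty]
    simp only [Nat.cast_zero]
    positivity
  · intro e he he1 hs
    have h1 := hB e (Finset.mem_union_left _ he)
    unfold EpsSimilar at hs
    rw [Nat.card_eq_fintype_card, Fintype.card_subtype, Fintype.card_coe] at hs
    have hc : (Finset.univ : Finset A) ⊆ (Finset.univ.filter (fun a : A =>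
        (if hg : (a : M) * Ψ e ∈ A then (⟨(a : M) * Ψ e, hg⟩ : A) else a) ≠ id a)) ∪
        B (Ψ e) := by
      intro a _
      by_cases ha : (a : M) * Ψ e ∈ A
      · refine Finset.mem_union_left _ (Finset.mem_filter.2 ⟨Finset.mem_univ _, ?_⟩)
        rw [dif_pos ha]
        intro hh
        have := congrArg Subtype.val hh
        simp only [id] at this
        exact hΨne e he he1 (mul_eq_left.1 this)
      · exact Finset.mem_union_right _ (Finset.mem_filter.2 ⟨Finset.mem_univ _, ha⟩)
    have hc' := (Finset.card_le_card hc).trans (Finset.card_union_le _ _)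
    rw [Finset.card_univ, Fintype.card_coe] at hc'
    have hc'' : ((_ : ℕ) : ℝ) ≤ ((_ : ℕ) : ℝ) := Nat.cast_le.2 hc'
    push_cast at hc''
    have := mul_pos hε hpos
    have h5 := hc''.trans (add_le_add hs h1)
    linarith
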